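/- arXiv:math/0104034 — 2 statements merged into one kernel-verified Lean document; each statement's English description precedes it below -/
import Mathlib

section
/- Let p, q, V, W : ℝ² → ℝ be smooth with p and q nowhere vanishing and satisfying the compatibility conditions, and let ψ : ℝ² → ℂ⁴ be a smooth solution of the Lie–Wilczynski system. Define ψ₁ = ∂₁ψ − (1/2)(∂₁q/q)ψ, ψ₂ = ∂₂ψ − (1/2)(∂₂p/p)ψ, η = ∂₁∂₂ψ − (1/2)(∂₁q/q)∂₂ψ − (1/2)(∂₂p/p)∂₁ψ + ((1/4)(∂₂p·∂₁q)/(p·q) − (1/2)p·q)ψ, and set k = p·q − ∂₁(∂₂p/p) (note ∂₁(∂₂p/p) = ∂₂(∂₁p/p) = ∂₁∂₂ ln p), l = p·q − ∂₁(∂₂q/q), a = W − ∂₂(∂₂p/p) − (1/2)(∂₂p/p)², b = V − ∂₁(∂₁q/q) − (1/2)(∂₁q/q)². Then the following first-order frame equations hold identically: ∂₁ψ = (1/2)(∂₁q/q)ψ + ψ₁; ∂₁ψ₁ = (1/2)b·ψ − (1/2)(∂₁q/q)ψ₁ − i p·ψ₂; ∂₁ψ₂ = (1/2)k·ψ + (1/2)(∂₁q/q)ψ₂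 + η; ∂₁η = −(i/2)p·a·ψ + (1/2)k·ψ₁ + (1/2)b·ψ₂ − (1/2)(∂₁q/q)η; ∂₂ψ = (1/2)(∂₂p/p)ψ + ψ₂; ∂₂ψ₁ = (1/2)l·ψ + (1/2)(∂₂p/p)ψ₁ + η; ∂₂ψ₂ = (1/2)a·ψ + i q·ψ₁ − (1/2)(∂₂p/p)ψ₂; ∂₂η = (i/2)q·b·ψ + (1/2)a·ψ₁ + (1/2)l·ψ₂ − (1/2)(∂₂p/p)η. -/
open Complex ComplexConjugate

noncomputable section

/-- Partial derivative in the first variable of a two-variable function. -/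
def pd1 {E : Type*} [NormedAddCommGroup E] [NormedSpace ℝ E]
    (f : ℝ → ℝ → E) (x y : ℝ) : E := deriv (fun t => f t y) x

/-- Partial derivative in the second variable of a two-variable function. -/
def pd2 {E : Type*} [NormedAddCommGroup E] [NormedSpace ℝ E]
    (f : ℝ → ℝ → E) (x y : ℝ) : E := deriv (fun t => f x t) y

/-- The pseudo-Hermitian form of signature (2,2) on ℂ⁴:
`⟨a,b⟩ = −a₀·conj(b₃) + a₁·conj(b₂) + a₂·conj(b₁) − a₃·conj(b₀)`. -/
def herm4 (a b : Fin 4 → ℂ) : ℂ :=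
  -(a 0 * conj (b 3)) + a 1 * conj (b 2) + a 2 * conj (b 1) - a 3 * conj (b 0)

/-- The wedge product of two vectors of ℂ⁴, as a vector in ℂ⁶, in the explicit
coordinates `y₀ = (p₀₂ − p₃₁)/2, y₁ = (p₀₂ + p₃₁)/2, y₂ = (p₀₃ + p₁₂)/2,
y₃ = (p₀₃ − p₁₂)/(2i), y₄ = (p₀₁ − p₂₃)/(2i), y₅ = (p₀₁ + p₂₃)/(2i)`,
where `p_{ij} = aᵢbⱼ − aⱼbᵢ`. -/
def wedgeC (a b : Fin 4 → ℂ) : Fin 6 → ℂ :=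
  ![((a 0 * b 2 - a 2 * b 0) - (a 3 * b 1 - a 1 * b 3)) / 2,
    ((a 0 * b 2 - a 2 * b 0) + (a 3 * b 1 - a 1 * b 3)) / 2,
    ((a 0 * b 3 - a 3 * b 0) + (a 1 * b 2 - a 2 * b 1)) / 2,
    ((a 0 * b 3 - a 3 * b 0) - (a 1 * b 2 - a 2 * b 1)) / (2 * Complex.I),
    ((a 0 * b 1 - a 1 * b 0) - (a 2 * b 3 - a 3 * b 2)) / (2 * Complex.I),
    ((a 0 * b 1 - a 1 * b 0) + (a 2 * b 3 - a 3 * b 2)) / (2 * Complex.I)]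

/-- The real bilinear form of signature (4,2) on ℝ⁶ (the Lie quadric form). -/
def Q6 (x y : Fin 6 → ℝ) : ℝ :=
  -(x 0 * y 0) + x 1 * y 1 + x 2 * y 2 + x 3 * y 3 + x 4 * y 4 - x 5 * y 5

/-- The pseudo-Hermitian form of signature (4,2) on ℂ⁶. -/
def herm6 (x y : Fin 6 → ℂ) : ℂ :=
  -(x 0 * conj (y 0)) + x 1 * conj (y 1) + x 2 * conj (y 2) + x 3 * conj (y 3)
    + x 4 * conj (y 4) - x 5 * conj (y 5)

/-- The complex bilinear form on ℂ⁶. -/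
def bil6 (x y : Fin 6 → ℂ) : ℂ :=
  -(x 0 * y 0) + x 1 * y 1 + x 2 * y 2 + x 3 * y 3 + x 4 * y 4 - x 5 * y 5

/-- The Euclidean dot product on ℝ³. -/
def dot3 (u v : Fin 3 → ℝ) : ℝ := u 0 * v 0 + u 1 * v 1 + u 2 * v 2

/-- The Schwarzian derivative `S(h) = h‴/h′ − (3/2)(h″/h′)²`. -/
def schwarzian (h : ℝ → ℝ) (x : ℝ) : ℝ :=
  deriv (deriv (deriv h)) x / deriv h x - (3/2) * (deriv (deriv h) x / deriv h x) ^ 2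

/-- `(∂₁ + c)² u`, an abbreviation for `∂₁(∂₁u + c·u) + c·(∂₁u + c·u)`. -/
def msq1 (c u : ℝ → ℝ → ℂ) : ℝ → ℝ → ℂ := fun x y =>
  pd1 (fun x' y' => pd1 u x' y' + c x' y' * u x' y') x y
    + c x y * (pd1 u x y + c x y * u x y)

/-- `(∂₂ + c)² u`, an abbreviation for `∂₂(∂₂u + c·u) + c·(∂₂u + c·u)`. -/
def msq2 (c u : ℝ → ℝ → ℂ) : ℝ → ℝ → ℂ := fun x y =>
  pd2 (fun x' y' => pd2 u x' y' + c x' y' * u x' y') x y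
    + c x y * (pd2 u x y + c x y * u x y)

/-- The real part map `U = −2·Im(ψ ∧ ∂₁ψ)` used to define the first curvature sphere. -/
def Uvec (ψ : ℝ → ℝ → Fin 4 → ℂ) : ℝ → ℝ → Fin 6 → ℝ :=
  fun x y i => -2 * (wedgeC (ψ x y) (pd1 ψ x y) i).im

/-- The real part map `S = 2·Re(ψ ∧ ∂₂ψ)` used to define the second curvature sphere. -/
def Svec (ψ : ℝ → ℝ → Fin 4 → ℂ) : ℝ → ℝ → Fin 6 → ℝ :=
  fun x y i => 2 * (wedgeC (ψ x y) (pd2 ψ x y) i).re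

/-!
Write `α = ∂₁q/q` and `β = ∂₂p/p`, so that `ψ₁ = ∂₁ψ - (α/2)ψ`, `ψ₂ = ∂₂ψ - (β/2)ψ` and
`η = ∂₁∂₂ψ - (α/2)∂₂ψ - (β/2)∂₁ψ + (αβ/4 - pq/2)ψ`. The equations for `∂₁ψ` and `∂₂ψ` are the
definitions of `ψ₁` and `ψ₂`. For the others, differentiate, and express both sides in
`ψ, ∂₁ψ, ∂₂ψ, ∂₁∂₂ψ`: the pure second derivatives are eliminated by the system, and the third
derivatives `∂₁∂₁∂₂ψ = ∂₂(∂₁²ψ)` and `∂₂∂₁∂₂ψ = ∂₁(∂₂²ψ)` in `∂ⱼη` by differentiating it. Then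
coefficients agree once `∂₁q = αq`, `∂₂p = βp` and the last two compatibility conditions, giving
`∂₂V` and `∂₁W`, are substituted. Symmetry of mixed partials (`Smooth2.pd_comm`) is what permits
the exchange of derivatives; applied to `q`, it gives `∂₁(∂₂q/q) = ∂₂(∂₁q/q)`
(`Smooth2.logDeriv_comm`), which identifies `l` with `pq - ∂₂α`.
-/

section Pd

variable {E : Type*} [NormedAddCommGroup E] [NormedSpace ℝ E]

/-- Joint smoothness of a curried function of two real variables. -/
def Smooth2 (f : ℝ → ℝ → E) : Prop :=
  ContDiff ℝ (⊤ : ℕ∞) (fun z : ℝ × ℝ => f z.1 z.2)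

theorem Smooth2.hasDerivAt_fst {f : ℝ → ℝ → E} (hf : Smooth2 f) (x y : ℝ) :
    HasDerivAt (fun t => f t y) (fderiv ℝ (fun z : ℝ × ℝ => f z.1 z.2) (x, y) (1, 0)) x := by
  have h : HasFDerivAt (fun z : ℝ × ℝ => f z.1 z.2)
      (fderiv ℝ (fun z : ℝ × ℝ => f z.1 z.2) (x, y)) (x, y) :=
    (hf.differentiable (by simp) _).hasFDerivAt
  exact h.comp_hasDerivAt x ((hasDerivAt_id x).prodMk (hasDerivAt_const x y))

theorem Smooth2.hasDerivAt_snd {f : ℝ → ℝ → E} (hf : Smooth2 f) (x y : ℝ) :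
    HasDerivAt (fun t => f x t) (fderiv ℝ (fun z : ℝ × ℝ => f z.1 z.2) (x, y) (0, 1)) y := by
  have h : HasFDerivAt (fun z : ℝ × ℝ => f z.1 z.2)
      (fderiv ℝ (fun z : ℝ × ℝ => f z.1 z.2) (x, y)) (x, y) :=
    (hf.differentiable (by simp) _).hasFDerivAt
  exact h.comp_hasDerivAt y ((hasDerivAt_const y x).prodMk (hasDerivAt_id y))

theorem Smooth2.hasDerivAt_pd1 {f : ℝ → ℝ → E} (hf : Smooth2 f) (x y : ℝ) :
    HasDerivAt (fun t => f t y) (pd1 f x y) x :=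
  (hf.hasDerivAt_fst x y).differentiableAt.hasDerivAt

theorem Smooth2.hasDerivAt_pd2 {f : ℝ → ℝ → E} (hf : Smooth2 f) (x y : ℝ) :
    HasDerivAt (fun t => f x t) (pd2 f x y) y :=
  (hf.hasDerivAt_snd x y).differentiableAt.hasDerivAt

theorem Smooth2.pd1_eq {f : ℝ → ℝ → E} (hf : Smooth2 f) (x y : ℝ) :
    pd1 f x y = fderiv ℝ (fun z : ℝ × ℝ => f z.1 z.2) (x, y) (1, 0) :=
  (hf.hasDerivAt_fst x y).deriv

theorem Smooth2.pd2_eq {f : ℝ → ℝ → E} (hf : Smooth2 f) (x y : ℝ) :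
    pd2 f x y = fderiv ℝ (fun z : ℝ × ℝ => f z.1 z.2) (x, y) (0, 1) :=
  (hf.hasDerivAt_snd x y).deriv

theorem Smooth2.pd1 {f : ℝ → ℝ → E} (hf : Smooth2 f) : Smooth2 (pd1 f) := by
  have h := (hf.fderiv_right (m := (⊤ : ℕ∞)) (by simp)).clm_apply
    (contDiff_const (c := ((1 : ℝ), (0 : ℝ))))
  have e : (fun z : ℝ × ℝ => _root_.pd1 f z.1 z.2) = _ := funext fun z => hf.pd1_eq z.1 z.2
  unfold Smooth2
  rw [e]
  exact h

theorem Smooth2.pd2 {f : ℝ → ℝ → E} (hf : Smooth2 f) : Smooth2 (pd2 f) := by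
  have h := (hf.fderiv_right (m := (⊤ : ℕ∞)) (by simp)).clm_apply
    (contDiff_const (c := ((0 : ℝ), (1 : ℝ))))
  have e : (fun z : ℝ × ℝ => _root_.pd2 f z.1 z.2) = _ := funext fun z => hf.pd2_eq z.1 z.2
  unfold Smooth2
  rw [e]
  exact h

/-- Symmetry of mixed partial derivatives for smooth functions. -/
theorem Smooth2.pd_comm {f : ℝ → ℝ → E} (hf : Smooth2 f) (x y : ℝ) :
    _root_.pd1 (_root_.pd2 f) x y = _root_.pd2 (_root_.pd1 f) x y := by
  have hF : DifferentiableAt ℝ (fderiv ℝ (fun z : ℝ × ℝ => f z.1 z.2)) (x, y) :=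
    (hf.fderiv_right (m := (⊤ : ℕ∞)) (by simp)).differentiable (by simp) _
  have hsymm : IsSymmSndFDerivAt ℝ (fun z : ℝ × ℝ => f z.1 z.2) (x, y) :=
    hf.contDiffAt.isSymmSndFDerivAt
      (by simpa using (show (2 : WithTop ℕ∞) ≤ ((⊤ : ℕ∞) : WithTop ℕ∞) from
        WithTop.coe_le_coe.2 (le_top : (2 : ℕ∞) ≤ ⊤)))
  rw [hf.pd2.pd1_eq, hf.pd1.pd2_eq]
  have h1 : (fun z : ℝ × ℝ => _root_.pd1 f z.1 z.2)
      = fun z => fderiv ℝ (fun z : ℝ × ℝ => f z.1 z.2) z (1, 0) :=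
    funext fun z => hf.pd1_eq z.1 z.2
  have h2 : (fun z : ℝ × ℝ => _root_.pd2 f z.1 z.2)
      = fun z => fderiv ℝ (fun z : ℝ × ℝ => f z.1 z.2) z (0, 1) :=
    funext fun z => hf.pd2_eq z.1 z.2
  rw [h1, h2, fderiv_clm_apply hF (by fun_prop), fderiv_clm_apply hF (by fun_prop)]
  simpa using hsymm.eq (1, 0) (0, 1)

theorem Smooth2.div {f g : ℝ → ℝ → ℝ} (hf : Smooth2 f) (hg : Smooth2 g)
    (h0 : ∀ x y, g x y ≠ 0) : Smooth2 (fun u v => f u v / g u v) :=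
  ContDiff.div (𝕜 := ℝ) hf hg fun z => h0 z.1 z.2

/-- For nowhere vanishing `q`, `∂₁(∂₂q/q) = ∂₂(∂₁q/q)`: both are the mixed second derivative of
`ln |q|`. -/
theorem Smooth2.logDeriv_comm {q : ℝ → ℝ → ℝ} (hq : Smooth2 q) (h0 : ∀ x y, q x y ≠ 0)
    (x y : ℝ) :
    _root_.pd1 (fun u v => _root_.pd2 q u v / q u v) x y
      = _root_.pd2 (fun u v => _root_.pd1 q u v / q u v) x y := by
  have e1 := ((hq.pd2.hasDerivAt_pd1 x y).div (hq.hasDerivAt_pd1 x y) (h0 x y)).deriv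
  have e2 := ((hq.pd1.hasDerivAt_pd2 x y).div (hq.hasDerivAt_pd2 x y) (h0 x y)).deriv
  refine e1.trans (Eq.trans ?_ e2.symm)
  rw [hq.pd_comm]
  ring

end Pd

/-- the first-order frame equations (the analogue of Wilczynski's
moving tetrahedral) satisfied by `ψ, ψ₁, ψ₂, η`. -/
theorem statement_6
    (p q V W : ℝ → ℝ → ℝ) (ψ ψ₁ ψ₂ η : ℝ → ℝ → Fin 4 → ℂ)
    (k l a b : ℝ → ℝ → ℝ)
    (hp : ContDiff ℝ (⊤ : ℕ∞) (fun z : ℝ × ℝ => p z.1 z.2))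
    (hq : ContDiff ℝ (⊤ : ℕ∞) (fun z : ℝ × ℝ => q z.1 z.2))
    (hV : ContDiff ℝ (⊤ : ℕ∞) (fun z : ℝ × ℝ => V z.1 z.2))
    (hW : ContDiff ℝ (⊤ : ℕ∞) (fun z : ℝ × ℝ => W z.1 z.2))
    (hψ : ContDiff ℝ (⊤ : ℕ∞) (fun z : ℝ × ℝ => ψ z.1 z.2))
    (hp0 : ∀ x y, p x y ≠ 0) (hq0 : ∀ x y, q x y ≠ 0)
    (hcomp1 : ∀ x y,
      pd2 (pd2 (pd2 p)) x y - 2 * W x y * pd2 p x y - p x y * pd2 W x y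
        + pd1 (pd1 (pd1 q)) x y - 2 * V x y * pd1 q x y - q x y * pd1 V x y = 0)
    (hcomp2 : ∀ x y, pd1 W x y = 2 * q x y * pd2 p x y + p x y * pd2 q x y)
    (hcomp3 : ∀ x y, pd2 V x y = 2 * p x y * pd1 q x y + q x y * pd1 p x y)
    (hLW1 : ∀ x y, pd1 (pd1 ψ) x y
        = (-(Complex.I * (p x y : ℂ))) • pd2 ψ x y
          + (((V x y : ℂ) + Complex.I * ((pd2 p x y : ℝ) : ℂ)) / 2) • ψ x y)
    (hLW2 : ∀ x y, pd2 (pd2 ψ) x y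
        = (Complex.I * (q x y : ℂ)) • pd1 ψ x y
          + (((W x y : ℂ) - Complex.I * ((pd1 q x y : ℝ) : ℂ)) / 2) • ψ x y)
    (hψ₁ : ∀ x y, ψ₁ x y
        = pd1 ψ x y - (((pd1 q x y / q x y : ℝ) : ℂ) / 2) • ψ x y)
    (hψ₂ : ∀ x y, ψ₂ x y
        = pd2 ψ x y - (((pd2 p x y / p x y : ℝ) : ℂ) / 2) • ψ x y)
    (hη : ∀ x y, η x y
        = pd1 (pd2 ψ) x y - (((pd1 q x y / q x y : ℝ) : ℂ) / 2) • pd2 ψ x y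
          - (((pd2 p x y / p x y : ℝ) : ℂ) / 2) • pd1 ψ x y
          + (((pd2 p x y * pd1 q x y / (p x y * q x y) / 4
                - p x y * q x y / 2 : ℝ) : ℂ)) • ψ x y)
    (hk : ∀ x y, k x y = p x y * q x y - pd1 (fun u v => pd2 p u v / p u v) x y)
    (hl : ∀ x y, l x y = p x y * q x y - pd1 (fun u v => pd2 q u v / q u v) x y)
    (ha : ∀ x y, a x y
        = W x y - pd2 (fun u v => pd2 p u v / p u v) x y - (pd2 p x y / p x y) ^ 2 / 2)
    (hb : ∀ x y, b x y
        = V x y - pd1 (fun u v => pd1 q u v / q u v) x y - (pd1 q x y / q x y) ^ 2 / 2) :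
    (∀ x y, pd1 ψ x y
        = (((pd1 q x y / q x y : ℝ) : ℂ) / 2) • ψ x y + ψ₁ x y) ∧
    (∀ x y, pd1 ψ₁ x y
        = ((b x y : ℂ) / 2) • ψ x y - (((pd1 q x y / q x y : ℝ) : ℂ) / 2) • ψ₁ x y
          - (Complex.I * (p x y : ℂ)) • ψ₂ x y) ∧
    (∀ x y, pd1 ψ₂ x y
        = ((k x y : ℂ) / 2) • ψ x y + (((pd1 q x y / q x y : ℝ) : ℂ) / 2) • ψ₂ x y
          + η x y) ∧
    (∀ x y, pd1 η x y
        = (-(Complex.I / 2) * ((p x y * a x y : ℝ) : ℂ)) • ψ x y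
          + ((k x y : ℂ) / 2) • ψ₁ x y + ((b x y : ℂ) / 2) • ψ₂ x y
          - (((pd1 q x y / q x y : ℝ) : ℂ) / 2) • η x y) ∧
    (∀ x y, pd2 ψ x y
        = (((pd2 p x y / p x y : ℝ) : ℂ) / 2) • ψ x y + ψ₂ x y) ∧
    (∀ x y, pd2 ψ₁ x y
        = ((l x y : ℂ) / 2) • ψ x y + (((pd2 p x y / p x y : ℝ) : ℂ) / 2) • ψ₁ x y
          + η x y) ∧
    (∀ x y, pd2 ψ₂ x y
        = ((a x y : ℂ) / 2) • ψ x y + (Complex.I * (q x y : ℂ)) • ψ₁ x y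
          - (((pd2 p x y / p x y : ℝ) : ℂ) / 2) • ψ₂ x y) ∧
    (∀ x y, pd2 η x y
        = ((Complex.I / 2) * ((q x y * b x y : ℝ) : ℂ)) • ψ x y
          + ((a x y : ℂ) / 2) • ψ₁ x y + ((l x y : ℂ) / 2) • ψ₂ x y
          - (((pd2 p x y / p x y : ℝ) : ℂ) / 2) • η x y) := by
  have sα : Smooth2 (fun u v => pd1 q u v / q u v) :=
    Smooth2.div (Smooth2.pd1 hq) hq hq0
  have sβ : Smooth2 (fun u v => pd2 p u v / p u v) :=
    Smooth2.div (Smooth2.pd2 hp) hp hp0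
  have hl' : ∀ x y, l x y = p x y * q x y - pd2 (fun u v => pd1 q u v / q u v) x y :=
    fun x y => by rw [hl, Smooth2.logDeriv_comm hq hq0]
  have hqα : ∀ x y, pd1 q x y = pd1 q x y / q x y * q x y :=
    fun x y => (div_mul_cancel₀ _ (hq0 x y)).symm
  have hpβ : ∀ x y, pd2 p x y = pd2 p x y / p x y * p x y :=
    fun x y => (div_mul_cancel₀ _ (hp0 x y)).symm
  -- The zeroth-order coefficient of `η`, in terms of the logarithmic derivatives.
  have hη' : ∀ x y, η x y
        = pd1 (pd2 ψ) x y - (((pd1 q x y / q x y : ℝ) : ℂ) / 2) • pd2 ψ x y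
          - (((pd2 p x y / p x y : ℝ) : ℂ) / 2) • pd1 ψ x y
          + (((pd2 p x y / p x y * (pd1 q x y / q x y) / 4
                - p x y * q x y / 2 : ℝ) : ℂ)) • ψ x y := fun x y => by
    rw [hη, div_mul_div_comm]
  clear hl hη
  generalize hα : (fun u v => pd1 q u v / q u v) = α at *
  generalize hβ : (fun u v => pd2 p u v / p u v) = β at *
  have hα' : ∀ x y, pd1 q x y / q x y = α x y := fun x y => congrFun (congrFun hα x) y
  have hβ' : ∀ x y, pd2 p x y / p x y = β x y := fun x y => congrFun (congrFun hβ x) y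
  simp only [hα', hβ'] at *
  clear hα hβ hα' hβ'
  have sψ : Smooth2 ψ := hψ
  have sp : Smooth2 p := hp
  have sq : Smooth2 q := hq
  have sV : Smooth2 V := hV
  have sW : Smooth2 W := hW
  -- Differentiating `∂₁q = αq` and `∂₂p = βp` once more.
  have hqxx : ∀ x y, pd1 (pd1 q) x y = pd1 α x y * q x y + α x y * (α x y * q x y) := by
    intro x y
    have h := ((sα.hasDerivAt_pd1 x y).mul (sq.hasDerivAt_pd1 x y)).deriv
    rw [hqα x y] at h
    rw [← h, show pd1 q = fun u v => α u v * q u v from funext fun u => funext fun v => hqα u v]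
    rfl
  have hpyy : ∀ x y, pd2 (pd2 p) x y = pd2 β x y * p x y + β x y * (β x y * p x y) := by
    intro x y
    have h := ((sβ.hasDerivAt_pd2 x y).mul (sp.hasDerivAt_pd2 x y)).deriv
    rw [hpβ x y] at h
    rw [← h, show pd2 p = fun u v => β u v * p u v from funext fun u => funext fun v => hpβ u v]
    rfl
  have e1 : pd1 (pd1 ψ) = fun x y => (-(Complex.I * (p x y : ℂ))) • pd2 ψ x y
      + (((V x y : ℂ) + Complex.I * ((pd2 p x y : ℝ) : ℂ)) / 2) • ψ x y :=
    funext fun x => funext fun y => hLW1 x y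
  have e2 : pd2 (pd2 ψ) = fun x y => (Complex.I * (q x y : ℂ)) • pd1 ψ x y
      + (((W x y : ℂ) - Complex.I * ((pd1 q x y : ℝ) : ℂ)) / 2) • ψ x y :=
    funext fun x => funext fun y => hLW2 x y
  obtain rfl : ψ₁ = _ := funext fun x => funext fun y => hψ₁ x y
  obtain rfl : ψ₂ = _ := funext fun x => funext fun y => hψ₂ x y
  obtain rfl : η = _ := funext fun x => funext fun y => hη' x y
  clear hψ₁ hψ₂ hη' hcomp1
  refine ⟨fun x y => by module, fun x y => ?_, fun x y => ?_, fun x y => ?_,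
    fun x y => by module, fun x y => ?_, fun x y => ?_, fun x y => ?_⟩
  · have h := ((sψ.pd1.hasDerivAt_pd1 x y).sub
      (((sα.hasDerivAt_pd1 x y).ofReal_comp.div_const 2).smul (sψ.hasDerivAt_pd1 x y))).deriv
    refine h.trans ?_
    rw [hLW1, hb, hpβ]
    match_scalars <;> ring
  · have h := ((sψ.pd2.hasDerivAt_pd1 x y).sub
      (((sβ.hasDerivAt_pd1 x y).ofReal_comp.div_const 2).smul (sψ.hasDerivAt_pd1 x y))).deriv
    refine h.trans ?_
    rw [hk]
    match_scalars <;> ring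
  · have h := ((((sψ.pd2.pd1.hasDerivAt_pd1 x y).sub
      (((sα.hasDerivAt_pd1 x y).ofReal_comp.div_const 2).smul (sψ.pd2.hasDerivAt_pd1 x y))).sub
      (((sβ.hasDerivAt_pd1 x y).ofReal_comp.div_const 2).smul (sψ.pd1.hasDerivAt_pd1 x y))).add
      ((((((sβ.hasDerivAt_pd1 x y).mul (sα.hasDerivAt_pd1 x y)).div_const 4).sub
        (((sp.hasDerivAt_pd1 x y).mul (sq.hasDerivAt_pd1 x y)).div_const 2)).ofReal_comp).smul
        (sψ.hasDerivAt_pd1 x y))).deriv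
    -- `∂₁∂₁∂₂ψ = ∂₂(∂₁∂₁ψ)`, and the inner factor is given by the first equation of the system.
    have h3 : pd1 (pd1 (pd2 ψ)) x y = pd2 (pd1 (pd1 ψ)) x y := by
      rw [show pd1 (pd2 ψ) = pd2 (pd1 ψ) from funext fun u => funext fun v => sψ.pd_comm u v]
      exact sψ.pd1.pd_comm x y
    have h4 := ((((sp.hasDerivAt_pd2 x y).ofReal_comp.const_mul Complex.I).neg.smul
      (sψ.pd2.hasDerivAt_pd2 x y)).add
      ((((sV.hasDerivAt_pd2 x y).ofReal_comp.add
        ((sp.pd2.hasDerivAt_pd2 x y).ofReal_comp.const_mul Complex.I)).div_const 2).smul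
        (sψ.hasDerivAt_pd2 x y))).deriv
    have h5 := h3.trans ((congrFun (congrFun (congrArg pd2 e1) x) y).trans h4)
    refine h.trans ?_
    rw [h5, hLW1, hLW2, hcomp3, hpyy, hk, hb, ha]
    simp only [hqα, hpβ]
    ext i
    simp only [Pi.add_apply, Pi.sub_apply, Pi.smul_apply, smul_eq_mul, Pi.neg_apply, Pi.mul_apply]
    push_cast
    ring_nf
    simp only [Complex.I_sq]
    ring
  · have h := ((sψ.pd1.hasDerivAt_pd2 x y).sub
      (((sα.hasDerivAt_pd2 x y).ofReal_comp.div_const 2).smul (sψ.hasDerivAt_pd2 x y))).deriv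
    refine h.trans ?_
    rw [hl', ← sψ.pd_comm]
    match_scalars <;> ring
  · have h := ((sψ.pd2.hasDerivAt_pd2 x y).sub
      (((sβ.hasDerivAt_pd2 x y).ofReal_comp.div_const 2).smul (sψ.hasDerivAt_pd2 x y))).deriv
    refine h.trans ?_
    rw [hLW2, ha, hqα]
    match_scalars <;> ring
  · have h := ((((sψ.pd2.pd1.hasDerivAt_pd2 x y).sub
      (((sα.hasDerivAt_pd2 x y).ofReal_comp.div_const 2).smul (sψ.pd2.hasDerivAt_pd2 x y))).sub
      (((sβ.hasDerivAt_pd2 x y).ofReal_comp.div_const 2).smul (sψ.pd1.hasDerivAt_pd2 x y))).add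
      ((((((sβ.hasDerivAt_pd2 x y).mul (sα.hasDerivAt_pd2 x y)).div_const 4).sub
        (((sp.hasDerivAt_pd2 x y).mul (sq.hasDerivAt_pd2 x y)).div_const 2)).ofReal_comp).smul
        (sψ.hasDerivAt_pd2 x y))).deriv
    have h3 : pd2 (pd1 (pd2 ψ)) x y = pd1 (pd2 (pd2 ψ)) x y := (sψ.pd2.pd_comm x y).symm
    have h4 := ((((sq.hasDerivAt_pd1 x y).ofReal_comp.const_mul Complex.I).smul
      (sψ.pd1.hasDerivAt_pd1 x y)).add
      ((((sW.hasDerivAt_pd1 x y).ofReal_comp.sub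
        ((sq.pd1.hasDerivAt_pd1 x y).ofReal_comp.const_mul Complex.I)).div_const 2).smul
        (sψ.hasDerivAt_pd1 x y))).deriv
    have h5 := h3.trans ((congrFun (congrFun (congrArg pd1 e2) x) y).trans h4)
    refine h.trans ?_
    rw [h5, hLW1, hLW2, hcomp2, hqxx, hl', hb, ha, ← sψ.pd_comm]
    simp only [hqα, hpβ]
    ext i
    simp only [Pi.add_apply, Pi.sub_apply, Pi.smul_apply, smul_eq_mul, Pi.mul_apply]
    push_cast
    ring_nf
    simp only [Complex.I_sq]
    ring
end
end

section
/- Let α, ρ₁, ρ₂, s₁, s₂, ε₀ ∈ ℝ and let ψ₁, ψ₂ : ℝ → ℝ be smooth solutions of ψ₁″ = α·ψ₁² + ρ₁·ψ₁ + s₁ and ψ₂″ = α·ψ₂² + ρ₂·ψ₂ + s₂. Define the differential operators acting on smooth functions u : ℝ² → ℂ (coordinates x, y): H u = (∂₁ + (i/2)ψ₂′(y))²u + (∂₂ + (i/2)ψ₁′(x))²u + V_H·u and F u = (∂₁ − (i/2)ψ₂′(y))²u − (∂₂ − (i/2)ψ₁′(x))²u + V_F·u, where V_H(x,y) = (1/4)(2ψ₂(y)ψ₁″(x)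 + 2ψ₁(x)ψ₂″(y) + ρ₂ψ₁(x)² + ρ₁ψ₂(y)² + ψ₂′(y)² + ψ₁′(x)² − 2ε₀(ψ₁(x)+ψ₂(y))) and V_F(x,y) = (1/4)(2ψ₂(y)ψ₁″(x) − 2ψ₁(x)ψ₂″(y) + ρ₂ψ₁(x)² − ρ₁ψ₂(y)² + ψ₂′(y)² − ψ₁′(x)² − 2ε₀(ψ₁(x)−ψ₂(y))). Then H and F commute: for every smooth u : ℝ² → ℂ, H(Fu) = F(Hu). -/
/-!
The smooth functions `ℝ → ℝ → ℂ` form a commutative `ℂ`-algebra on which `∂₁` and `∂₂` are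
commuting derivations, so the theorem is an identity in any commutative ring with two commuting
derivations (`commute_abstract`).

Expanding the squares removes the terms `ψ₁'²`, `ψ₂'²` from the potentials and leaves
`H = ∂₁² + ∂₂² + i(ψ₂'∂₁ + ψ₁'∂₂) + W_H` and `F = ∂₁² - ∂₂² - i(ψ₂'∂₁ - ψ₁'∂₂) + W_F`.
In `[H, F]` the second-order terms cancel identically, and the first-order terms cancel because
`W_F - W_H = -ψ₁ψ₂'' + (function of y)` and `W_F + W_H = ψ₂ψ₁'' + (function of x)`.
In the zeroth-order term the real part is `-ψ₁''ψ₂'' + ψ₁''ψ₂'' = 0`, and the imaginary part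
`ψ₂'∂₁(W_F + W_H) + ψ₁'∂₂(W_F - W_H)` vanishes by the differentiated equations
`ψⱼ''' = (2αψⱼ + ρⱼ)ψⱼ'`, which share the coefficient `α`.
-/

open Complex ComplexConjugate

noncomputable section

/-! ### Differential algebra -/

/-- The commutation of `H` and `F` in a commutative ring with commuting derivations `D₁`, `D₂`.
Here `p`, `q` play the roles of `ψ₁(x)`, `ψ₂(y)`, and `j`, `k` those of `i/2`, `1/4`; the only
relation needed between the latter two is `j² = -k`. -/
lemma commute_abstract {R : Type*} [CommRing R] [Algebra ℂ R] (D₁ D₂ : Derivation ℂ R R)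
    (hD : ∀ f, D₁ (D₂ f) = D₂ (D₁ f)) (p q a b α r₁ r₂ s₁ s₂ e j k : R)
    (hp₁ : D₁ p = a) (hp₂ : D₂ p = 0) (hq₁ : D₁ q = 0) (hq₂ : D₂ q = b)
    (ha₁ : D₁ a = α * p ^ 2 + r₁ * p + s₁) (ha₂ : D₂ a = 0)
    (hb₁ : D₁ b = 0) (hb₂ : D₂ b = α * q ^ 2 + r₂ * q + s₂)
    (hc : ∀ c ∈ [α, r₁, r₂, s₁, s₂, e, j, k], D₁ c = 0 ∧ D₂ c = 0)
    (hjk : j * j = -k) (VH VF : R)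
    (hVH : VH = k * (2 * q * D₁ a + 2 * p * D₂ b + r₂ * p ^ 2 + r₁ * q ^ 2 + b ^ 2 + a ^ 2
      - 2 * e * (p + q)))
    (hVF : VF = k * (2 * q * D₁ a - 2 * p * D₂ b + r₂ * p ^ 2 - r₁ * q ^ 2 + b ^ 2 - a ^ 2
      - 2 * e * (p - q)))
    (H F : R → R)
    (hH : ∀ u, H u = (D₁ (D₁ u + j * b * u) + j * b * (D₁ u + j * b * u))
      + (D₂ (D₂ u + j * a * u) + j * a * (D₂ u + j * a * u)) + VH * u)
    (hF : ∀ u, F u = (D₁ (D₁ u + -j * b * u) + -j * b * (D₁ u + -j * b * u))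
      - (D₂ (D₂ u + -j * a * u) + -j * a * (D₂ u + -j * a * u)) + VF * u) (u : R) :
    H (F u) = F (H u) := by
  simp only [List.mem_cons, List.not_mem_nil, or_false, forall_eq_or_imp, forall_eq] at hc
  obtain ⟨⟨c1, d1⟩, ⟨c2, d2⟩, ⟨c3, d3⟩, ⟨c4, d4⟩, ⟨c5, d5⟩, ⟨c6, d6⟩, ⟨c7, d7⟩, ⟨c8, d8⟩⟩ := hc
  have two₁ : D₁ 2 = 0 := by exact_mod_cast D₁.map_natCast 2
  have two₂ : D₂ 2 = 0 := by exact_mod_cast D₂.map_natCast 2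
  -- The normal forms of the two operators, with the magnetic squares absorbed.
  have hH' : ∀ u, H u = D₁ (D₁ u) + D₂ (D₂ u) + 2 * j * b * D₁ u + 2 * j * a * D₂ u
      + k * (2 * q * (α * p ^ 2 + r₁ * p + s₁) + 2 * p * (α * q ^ 2 + r₂ * q + s₂)
        + r₂ * p ^ 2 + r₁ * q ^ 2 - 2 * e * (p + q)) * u := by
    intro u
    rw [hH, hVH, ha₁, hb₂]
    simp only [map_add, Derivation.leibniz, smul_eq_mul, c7, d7, hb₁, ha₂]
    linear_combination (a ^ 2 + b ^ 2) * u * hjk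
  have hF' : ∀ u, F u = D₁ (D₁ u) - D₂ (D₂ u) - 2 * j * b * D₁ u + 2 * j * a * D₂ u
      + k * (2 * q * (α * p ^ 2 + r₁ * p + s₁) - 2 * p * (α * q ^ 2 + r₂ * q + s₂)
        + r₂ * p ^ 2 - r₁ * q ^ 2 - 2 * e * (p - q)) * u := by
    intro u
    rw [hF, hVF, ha₁, hb₂]
    simp only [map_add, map_neg, Derivation.leibniz, smul_eq_mul, c7, d7, hb₁, ha₂]
    linear_combination (b ^ 2 - a ^ 2) * u * hjk
  rw [hH' (F u), hF' (H u), hH', hF']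
  simp only [map_add, map_sub, Derivation.leibniz, smul_eq_mul, pow_two, two₁, two₂,
    c1, c2, c3, c4, c5, c6, c7, c8, d1, d2, d3, d4, d5, d6, d7, d8,
    hp₁, hp₂, hq₁, hq₂, ha₁, ha₂, hb₁, hb₂, hD, map_zero, mul_zero, zero_add, add_zero]
  linear_combination 8 * (b * (α * p ^ 2 + r₁ * p + s₁) * D₂ u
    - a * (α * q ^ 2 + r₂ * q + s₂) * D₁ u) * hjk

/-! ### Smooth functions with their two derivations -/

/-- The algebra of smooth complex-valued functions on the plane, in curried form. -/
def smoothAlg : Subalgebra ℂ (ℝ → ℝ → ℂ) where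
  carrier := {f | ContDiff ℝ (⊤ : ℕ∞) (fun z : ℝ × ℝ => f z.1 z.2)}
  mul_mem' {f g} hf hg := by
    have hf' : ContDiff ℝ (⊤ : ℕ∞) (fun z : ℝ × ℝ => f z.1 z.2) := hf
    exact hf'.mul hg
  add_mem' {f g} hf hg := by
    have hf' : ContDiff ℝ (⊤ : ℕ∞) (fun z : ℝ × ℝ => f z.1 z.2) := hf
    exact hf'.add hg
  algebraMap_mem' c :=
    (contDiff_const : ContDiff ℝ (⊤ : ℕ∞) (fun _ : ℝ × ℝ => c))

lemma smooth_slice1 {f : ℝ → ℝ → ℂ} (hf : f ∈ smoothAlg) (x y : ℝ) :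
    DifferentiableAt ℝ (fun t => f t y) x := by
  have h : ContDiff ℝ (⊤ : ℕ∞) (fun z : ℝ × ℝ => f z.1 z.2) := hf
  have h2 : ContDiff ℝ (⊤ : ℕ∞) (fun t : ℝ => f t y) :=
    h.comp (contDiff_id.prodMk contDiff_const : ContDiff ℝ (⊤ : ℕ∞) (fun t : ℝ => (t, y)))
  exact (h2.differentiable (by simp)) x

lemma smooth_slice2 {f : ℝ → ℝ → ℂ} (hf : f ∈ smoothAlg) (x y : ℝ) :
    DifferentiableAt ℝ (fun t => f x t) y := by
  have h : ContDiff ℝ (⊤ : ℕ∞) (fun z : ℝ × ℝ => f z.1 z.2) := hf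
  have h2 : ContDiff ℝ (⊤ : ℕ∞) (fun t : ℝ => f x t) :=
    h.comp (contDiff_const.prodMk contDiff_id : ContDiff ℝ (⊤ : ℕ∞) (fun t : ℝ => (x, t)))
  exact (h2.differentiable (by simp)) y

lemma pd1_eq_fderiv {f : ℝ → ℝ → ℂ} {x y : ℝ}
    (h : DifferentiableAt ℝ (fun z : ℝ × ℝ => f z.1 z.2) (x, y)) :
    pd1 f x y = fderiv ℝ (fun z : ℝ × ℝ => f z.1 z.2) (x, y) (1, 0) :=
  (HasFDerivAt.comp_hasDerivAt (f := fun t : ℝ => (t, y)) x h.hasFDerivAt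
    ((hasDerivAt_id x).prodMk (hasDerivAt_const x y))).deriv

lemma pd2_eq_fderiv {f : ℝ → ℝ → ℂ} {x y : ℝ}
    (h : DifferentiableAt ℝ (fun z : ℝ × ℝ => f z.1 z.2) (x, y)) :
    pd2 f x y = fderiv ℝ (fun z : ℝ × ℝ => f z.1 z.2) (x, y) (0, 1) :=
  (HasFDerivAt.comp_hasDerivAt (f := fun t : ℝ => (x, t)) y h.hasFDerivAt
    ((hasDerivAt_const y x).prodMk (hasDerivAt_id y))).deriv

lemma pd1_mem {f : ℝ → ℝ → ℂ} (hf : f ∈ smoothAlg) : pd1 f ∈ smoothAlg := by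
  have h : ContDiff ℝ (⊤ : ℕ∞) (fun z : ℝ × ℝ => f z.1 z.2) := hf
  have e : (fun z : ℝ × ℝ => pd1 f z.1 z.2)
      = fun z => fderiv ℝ (fun z : ℝ × ℝ => f z.1 z.2) z (1, 0) :=
    funext fun z => pd1_eq_fderiv (h.differentiable (by simp) _)
  change ContDiff ℝ (⊤ : ℕ∞) (fun z : ℝ × ℝ => pd1 f z.1 z.2)
  rw [e]
  exact (h.fderiv_right (m := (⊤ : ℕ∞)) (by simp)).clm_apply contDiff_const

lemma pd2_mem {f : ℝ → ℝ → ℂ} (hf : f ∈ smoothAlg) : pd2 f ∈ smoothAlg := by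
  have h : ContDiff ℝ (⊤ : ℕ∞) (fun z : ℝ × ℝ => f z.1 z.2) := hf
  have e : (fun z : ℝ × ℝ => pd2 f z.1 z.2)
      = fun z => fderiv ℝ (fun z : ℝ × ℝ => f z.1 z.2) z (0, 1) :=
    funext fun z => pd2_eq_fderiv (h.differentiable (by simp) _)
  change ContDiff ℝ (⊤ : ℕ∞) (fun z : ℝ × ℝ => pd2 f z.1 z.2)
  rw [e]
  exact (h.fderiv_right (m := (⊤ : ℕ∞)) (by simp)).clm_apply contDiff_const

/-- Symmetry of second derivatives. -/
lemma pd1_pd2_comm {f : ℝ → ℝ → ℂ} (hf : f ∈ smoothAlg) : pd1 (pd2 f) = pd2 (pd1 f) := by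
  have h : ContDiff ℝ (⊤ : ℕ∞) (fun z : ℝ × ℝ => f z.1 z.2) := hf
  have hd : Differentiable ℝ (fderiv ℝ (fun z : ℝ × ℝ => f z.1 z.2)) :=
    (h.fderiv_right (m := (⊤ : ℕ∞)) (by simp)).differentiable (by simp)
  have e1 : (fun z : ℝ × ℝ => pd1 f z.1 z.2)
      = fun z => fderiv ℝ (fun z : ℝ × ℝ => f z.1 z.2) z (1, 0) :=
    funext fun z => pd1_eq_fderiv (h.differentiable (by simp) _)
  have e2 : (fun z : ℝ × ℝ => pd2 f z.1 z.2)
      = fun z => fderiv ℝ (fun z : ℝ × ℝ => f z.1 z.2) z (0, 1) :=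
    funext fun z => pd2_eq_fderiv (h.differentiable (by simp) _)
  funext x y
  have k1 : ContDiff ℝ (⊤ : ℕ∞) (fun z : ℝ × ℝ => pd1 f z.1 z.2) := pd1_mem hf
  have k2 : ContDiff ℝ (⊤ : ℕ∞) (fun z : ℝ × ℝ => pd2 f z.1 z.2) := pd2_mem hf
  rw [pd1_eq_fderiv (k2.differentiable (by simp) _), pd2_eq_fderiv (k1.differentiable (by simp) _),
    e1, e2, fderiv_clm_apply (hd _) (by fun_prop), fderiv_clm_apply (hd _) (by fun_prop)]
  have hs : IsSymmSndFDerivAt ℝ (fun z : ℝ × ℝ => f z.1 z.2) (x, y) :=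
    h.contDiffAt.isSymmSndFDerivAt (by simpa using WithTop.coe_le_coe.2 (le_top : (2 : ℕ∞) ≤ ⊤))
  simpa using hs (1, 0) (0, 1)

/-- `∂₁` as a derivation of the algebra of smooth functions. -/
def der1 : Derivation ℂ smoothAlg smoothAlg :=
  Derivation.mk'
    { toFun := fun f => ⟨pd1 f.1, pd1_mem f.2⟩
      map_add' := fun f g => Subtype.ext <| funext fun x => funext fun y =>
        deriv_add (smooth_slice1 f.2 x y) (smooth_slice1 g.2 x y)
      map_smul' := fun c f => Subtype.ext <| funext fun x => funext fun y =>
        deriv_const_smul c (smooth_slice1 f.2 x y) }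
    fun f g => Subtype.ext <| funext fun x => funext fun y => by
      refine (deriv_mul (smooth_slice1 f.2 x y) (smooth_slice1 g.2 x y)).trans ?_
      change _ = f.1 x y * pd1 g.1 x y + g.1 x y * pd1 f.1 x y
      unfold pd1
      ring

/-- `∂₂` as a derivation of the algebra of smooth functions. -/
def der2 : Derivation ℂ smoothAlg smoothAlg :=
  Derivation.mk'
    { toFun := fun f => ⟨pd2 f.1, pd2_mem f.2⟩
      map_add' := fun f g => Subtype.ext <| funext fun x => funext fun y =>
        deriv_add (smooth_slice2 f.2 x y) (smooth_slice2 g.2 x y)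
      map_smul' := fun c f => Subtype.ext <| funext fun x => funext fun y =>
        deriv_const_smul c (smooth_slice2 f.2 x y) }
    fun f g => Subtype.ext <| funext fun x => funext fun y => by
      refine (deriv_mul (smooth_slice2 f.2 x y) (smooth_slice2 g.2 x y)).trans ?_
      change _ = f.1 x y * pd2 g.1 x y + g.1 x y * pd2 f.1 x y
      unfold pd2
      ring

/-! ### Functions of one variable and pointwise evaluation -/

/-- A smooth real function of `x`, as an element of `smoothAlg`. -/
def ofX (g : ℝ → ℝ) (hg : ContDiff ℝ (⊤ : ℕ∞) g) : smoothAlg :=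
  ⟨fun x _ => (g x : ℂ), (Complex.ofRealCLM.contDiff.comp (hg.comp contDiff_fst) :
    ContDiff ℝ (⊤ : ℕ∞) (fun z : ℝ × ℝ => (g z.1 : ℂ)))⟩

/-- A smooth real function of `y`, as an element of `smoothAlg`. -/
def ofY (g : ℝ → ℝ) (hg : ContDiff ℝ (⊤ : ℕ∞) g) : smoothAlg :=
  ⟨fun _ y => (g y : ℂ), (Complex.ofRealCLM.contDiff.comp (hg.comp contDiff_snd) :
    ContDiff ℝ (⊤ : ℕ∞) (fun z : ℝ × ℝ => (g z.2 : ℂ)))⟩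

lemma ofX_val {g : ℝ → ℝ} (hg : ContDiff ℝ (⊤ : ℕ∞) g) (x y : ℝ) : (ofX g hg).1 x y = g x := rfl

lemma ofY_val {g : ℝ → ℝ} (hg : ContDiff ℝ (⊤ : ℕ∞) g) (x y : ℝ) : (ofY g hg).1 x y = g y := rfl

lemma const_val (c : ℂ) (x y : ℝ) : (algebraMap ℂ smoothAlg c).1 x y = c := rfl

lemma add_val (f g : smoothAlg) (x y : ℝ) : (f + g).1 x y = f.1 x y + g.1 x y := rfl

lemma sub_val (f g : smoothAlg) (x y : ℝ) : (f - g).1 x y = f.1 x y - g.1 x y := rfl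

lemma neg_val (f : smoothAlg) (x y : ℝ) : (-f).1 x y = -f.1 x y := rfl

lemma mul_val (f g : smoothAlg) (x y : ℝ) : (f * g).1 x y = f.1 x y * g.1 x y := rfl

lemma sq_val (f : smoothAlg) (x y : ℝ) : (f ^ 2).1 x y = f.1 x y ^ 2 := by
  rw [pow_two, pow_two, mul_val]

lemma two_val (x y : ℝ) : (2 : smoothAlg).1 x y = 2 := by
  rw [← one_add_one_eq_two, ← one_add_one_eq_two, add_val]
  rfl

/-- When the coefficient and the argument are smooth, `msq1` is given by the derivation `der1`. -/
lemma msq1_val {c : ℝ → ℝ → ℂ} (C U : smoothAlg) (h : c = C.1) (x y : ℝ) :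
    msq1 c U.1 x y = (der1 (der1 U + C * U) + C * (der1 U + C * U)).1 x y := by
  subst h
  rfl

/-- When the coefficient and the argument are smooth, `msq2` is given by the derivation `der2`. -/
lemma msq2_val {c : ℝ → ℝ → ℂ} (C U : smoothAlg) (h : c = C.1) (x y : ℝ) :
    msq2 c U.1 x y = (der2 (der2 U + C * U) + C * (der2 U + C * U)).1 x y := by
  subst h
  rfl

lemma smooth_deriv {g : ℝ → ℝ} (hg : ContDiff ℝ (⊤ : ℕ∞) g) :
    ContDiff ℝ (⊤ : ℕ∞) (deriv g) :=
  (contDiff_infty_iff_deriv.1 hg).2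

lemma der1_ofX {g : ℝ → ℝ} (hg : ContDiff ℝ (⊤ : ℕ∞) g) :
    der1 (ofX g hg) = ofX (deriv g) (smooth_deriv hg) :=
  Subtype.ext <| funext fun x => funext fun _ =>
    ((hg.differentiable (by simp) x).hasDerivAt.ofReal_comp).deriv

lemma der2_ofY {g : ℝ → ℝ} (hg : ContDiff ℝ (⊤ : ℕ∞) g) :
    der2 (ofY g hg) = ofY (deriv g) (smooth_deriv hg) :=
  Subtype.ext <| funext fun _ => funext fun y =>
    ((hg.differentiable (by simp) y).hasDerivAt.ofReal_comp).deriv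

lemma der2_ofX {g : ℝ → ℝ} (hg : ContDiff ℝ (⊤ : ℕ∞) g) : der2 (ofX g hg) = 0 :=
  Subtype.ext <| funext fun x => funext fun y => deriv_const y (g x : ℂ)

lemma der1_ofY {g : ℝ → ℝ} (hg : ContDiff ℝ (⊤ : ℕ∞) g) : der1 (ofY g hg) = 0 :=
  Subtype.ext <| funext fun x => funext fun y => deriv_const x (g y : ℂ)

/-! ### The differential operators -/

/-- the Schrödinger operators with magnetic terms `H` and `F`
associated with the case `c = 0` of Lie-applicable surfaces commute. -/
theorem statement_13 (α ρ₁ ρ₂ s₁ s₂ ε₀ : ℝ) (ψ₁ ψ₂ : ℝ → ℝ)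
    (hψ₁ : ContDiff ℝ (⊤ : ℕ∞) ψ₁) (hψ₂ : ContDiff ℝ (⊤ : ℕ∞) ψ₂)
    (hode₁ : ∀ t, deriv (deriv ψ₁) t = α * (ψ₁ t) ^ 2 + ρ₁ * ψ₁ t + s₁)
    (hode₂ : ∀ t, deriv (deriv ψ₂) t = α * (ψ₂ t) ^ 2 + ρ₂ * ψ₂ t + s₂)
    (VH VF : ℝ → ℝ → ℝ)
    (hVH : ∀ x y, VH x y
        = (2 * ψ₂ y * deriv (deriv ψ₁) x + 2 * ψ₁ x * deriv (deriv ψ₂) y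
            + ρ₂ * (ψ₁ x) ^ 2 + ρ₁ * (ψ₂ y) ^ 2 + (deriv ψ₂ y) ^ 2
            + (deriv ψ₁ x) ^ 2 - 2 * ε₀ * (ψ₁ x + ψ₂ y)) / 4)
    (hVF : ∀ x y, VF x y
        = (2 * ψ₂ y * deriv (deriv ψ₁) x - 2 * ψ₁ x * deriv (deriv ψ₂) y
            + ρ₂ * (ψ₁ x) ^ 2 - ρ₁ * (ψ₂ y) ^ 2 + (deriv ψ₂ y) ^ 2
            - (deriv ψ₁ x) ^ 2 - 2 * ε₀ * (ψ₁ x - ψ₂ y)) / 4)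
    (H F : (ℝ → ℝ → ℂ) → ℝ → ℝ → ℂ)
    (hH : ∀ u x y, H u x y
        = msq1 (fun _ y' => Complex.I / 2 * ((deriv ψ₂ y' : ℝ) : ℂ)) u x y
          + msq2 (fun x' _ => Complex.I / 2 * ((deriv ψ₁ x' : ℝ) : ℂ)) u x y
          + (VH x y : ℂ) * u x y)
    (hF : ∀ u x y, F u x y
        = msq1 (fun _ y' => -(Complex.I / 2) * ((deriv ψ₂ y' : ℝ) : ℂ)) u x y
          - msq2 (fun x' _ => -(Complex.I / 2) * ((deriv ψ₁ x' : ℝ) : ℂ)) u x y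
          + (VF x y : ℂ) * u x y) :
    ∀ u : ℝ → ℝ → ℂ, ContDiff ℝ (⊤ : ℕ∞) (fun z : ℝ × ℝ => u z.1 z.2) →
      ∀ x y, H (F u) x y = F (H u) x y := by
  intro u hu x y
  let c : ℂ → smoothAlg := algebraMap ℂ smoothAlg
  have hc0 : ∀ z, der1 (c z) = 0 ∧ der2 (c z) = 0 := fun z =>
    ⟨der1.map_algebraMap z, der2.map_algebraMap z⟩
  have hψ₁' := smooth_deriv hψ₁
  have hψ₂' := smooth_deriv hψ₂
  let p := ofX ψ₁ hψ₁
  let q := ofY ψ₂ hψ₂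
  let a := ofX (deriv ψ₁) hψ₁'
  let b := ofY (deriv ψ₂) hψ₂'
  let j := c (Complex.I / 2)
  let k := c (1 / 4)
  let vH : smoothAlg := k * (2 * q * der1 a + 2 * p * der2 b + c ρ₂ * p ^ 2 + c ρ₁ * q ^ 2
    + b ^ 2 + a ^ 2 - 2 * c ε₀ * (p + q))
  let vF : smoothAlg := k * (2 * q * der1 a - 2 * p * der2 b + c ρ₂ * p ^ 2 - c ρ₁ * q ^ 2
    + b ^ 2 - a ^ 2 - 2 * c ε₀ * (p - q))
  let opH : smoothAlg → smoothAlg := fun u =>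
    (der1 (der1 u + j * b * u) + j * b * (der1 u + j * b * u))
      + (der2 (der2 u + j * a * u) + j * a * (der2 u + j * a * u)) + vH * u
  let opF : smoothAlg → smoothAlg := fun u =>
    (der1 (der1 u + -j * b * u) + -j * b * (der1 u + -j * b * u))
      - (der2 (der2 u + -j * a * u) + -j * a * (der2 u + -j * a * u)) + vF * u
  have ea : der1 a = ofX (deriv (deriv ψ₁)) (smooth_deriv hψ₁') := der1_ofX hψ₁'
  have eb : der2 b = ofY (deriv (deriv ψ₂)) (smooth_deriv hψ₂') := der2_ofY hψ₂'
  have evH : ∀ x y, vH.1 x y = (VH x y : ℂ) := by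
    intro x y
    simp only [vH, ea, eb, hVH, p, q, a, b, k, c, add_val, sub_val, mul_val, sq_val, two_val,
      ofX_val, ofY_val, const_val]
    push_cast
    ring
  have evF : ∀ x y, vF.1 x y = (VF x y : ℂ) := by
    intro x y
    simp only [vF, ea, eb, hVF, p, q, a, b, k, c, add_val, sub_val, mul_val, sq_val, two_val,
      ofX_val, ofY_val, const_val]
    push_cast
    ring
  have eH : ∀ v : smoothAlg, H v.1 = (opH v).1 := by
    intro v
    funext x y
    rw [hH, ← evH,
      msq1_val (c := fun _ y' => Complex.I / 2 * ((deriv ψ₂ y' : ℝ) : ℂ)) (j * b) v rfl,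
      msq2_val (c := fun x' _ => Complex.I / 2 * ((deriv ψ₁ x' : ℝ) : ℂ)) (j * a) v rfl]
    rfl
  have eF : ∀ v : smoothAlg, F v.1 = (opF v).1 := by
    intro v
    funext x y
    rw [hF, ← evF,
      msq1_val (c := fun _ y' => -(Complex.I / 2) * ((deriv ψ₂ y' : ℝ) : ℂ)) (-j * b) v rfl,
      msq2_val (c := fun x' _ => -(Complex.I / 2) * ((deriv ψ₁ x' : ℝ) : ℂ)) (-j * a) v rfl]
    rfl
  have key : opH (opF ⟨u, hu⟩) = opF (opH ⟨u, hu⟩) := by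
    refine commute_abstract der1 der2 (fun f => Subtype.ext (pd1_pd2_comm f.2)) p q a b
      (c α) (c ρ₁) (c ρ₂) (c s₁) (c s₂) (c ε₀) j k (der1_ofX hψ₁) (der2_ofX hψ₁)
      (der1_ofY hψ₂) (der2_ofY hψ₂) ?_ (der2_ofX hψ₁') (der1_ofY hψ₂') ?_ ?_ ?_ vH vF rfl rfl
      opH opF (fun _ => rfl) (fun _ => rfl) _
    · rw [ea]
      refine Subtype.ext <| funext fun x => funext fun y => ?_
      simp only [p, c, add_val, mul_val, sq_val, ofX_val, const_val, hode₁]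
      push_cast
      rfl
    · rw [eb]
      refine Subtype.ext <| funext fun x => funext fun y => ?_
      simp only [q, c, add_val, mul_val, sq_val, ofY_val, const_val, hode₂]
      push_cast
      rfl
    · simp only [List.mem_cons, List.not_mem_nil, or_false, forall_eq_or_imp, forall_eq, j, k,
        hc0, and_self]
    · simp only [j, k, c, ← map_mul, ← map_neg]
      congr 1
      linear_combination Complex.I_mul_I / 4
  rw [show F u = (opF ⟨u, hu⟩).1 from eF ⟨u, hu⟩, show H u = (opH ⟨u, hu⟩).1 from eH ⟨u, hu⟩,
    eH, eF, key]
end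
end
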